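/- The function f(x) = 1/sinh(x) is logarithmically completely monotonic on (0,∞): indeed -f'(x)/f(x) = coth(x) = 1 + 2 Σ_{k=1}^∞ e^{-2kx} is completely monotonic. Moreover, for every λ > 0, f is not a generalized Stieltjes function of order λ (since x^λ f(x) → 0 as x → ∞ while x^λ times any nonzero generalized Stieltjes function of order λ does not tend to 0). -/

import Mathlib

open MeasureTheory Filter Set

/-- The Laplace transform of `g`. -/
noncomputable def LaplaceTransform (g : ℝ → ℝ) (x : ℝ) : ℝ :=
  ∫ t in Set.Ioi (0:ℝ), Real.exp (-x * t) * g t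

/-- `f` is completely monotonic on `(0,∞)`. -/
def CompletelyMonotonic (f : ℝ → ℝ) : Prop :=
  (∀ x : ℝ, 0 < x → ContDiffAt ℝ (⊤ : ℕ∞) f x) ∧
  ∀ (n : ℕ) (x : ℝ), 0 < x → 0 ≤ (-1 : ℝ) ^ n * iteratedDeriv n f x

/-- `f` is logarithmically completely monotonic on `(0,∞)`. -/
def LogCompletelyMonotonic (f : ℝ → ℝ) : Prop :=
  (∀ x : ℝ, 0 < x → 0 < f x) ∧ (∀ x : ℝ, 0 < x → ContDiffAt ℝ (⊤ : ℕ∞) f x) ∧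
  CompletelyMonotonic (fun x => -deriv f x / f x)

/-- `f` is a generalized Stieltjes function of order `lam` on `(0,∞)`. -/
def IsGenStieltjes (lam : ℝ) (f : ℝ → ℝ) : Prop :=
  ∃ (μ : Measure ℝ) (c : ℝ), 0 ≤ c ∧ μ (Set.Iio 0) = 0 ∧
    ∀ x : ℝ, 0 < x →
      Integrable (fun t => (x + t) ^ (-lam)) μ ∧
      f x = (∫ t, (x + t) ^ (-lam) ∂μ) + c

/-- Nielsen's beta function. -/
noncomputable def nielsenBeta (x : ℝ) : ℝ :=
  ∫ t in Set.Ioi (0:ℝ), Real.exp (-x * t) / (1 + Real.exp (-t))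

/-!
Write `f = 1 / sinh`. The function `u = coth - 1` is nonnegative on `(0,∞)` and satisfies
`u' = -(u² + 2u)`. For a polynomial `P` with nonnegative coefficients,
`(P ∘ u)' = -(P' · (X² + 2X)) ∘ u` is again minus such a polynomial in `u`, so every `P ∘ u` is
completely monotonic, in particular `-f'/f = coth = 1 + u`.

For `g` in `S_λ` the function `x ↦ x ^ λ * g x` is nondecreasing, because each `(x / (x + t)) ^ λ`
is; so it can tend to `0` at infinity only if `g = 0`, while `x ^ λ / sinh x` tends to `0`.
-/

open scoped NNReal Polynomial Topology ContDiff

lemma contDiffOn_infty_of_hasDerivAt_comp {𝕜 E : Type*} [NontriviallyNormedField 𝕜]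
    [NormedAddCommGroup E] [NormedSpace 𝕜 E] {u : 𝕜 → E} {F : E → E} {s : Set 𝕜} (hs : IsOpen s)
    (hF : ContDiff 𝕜 ∞ F) (hu : ∀ x ∈ s, HasDerivAt u (F (u x)) x) : ContDiffOn 𝕜 ∞ u s := by
  have hdiff : DifferentiableOn 𝕜 u s := fun x hx =>
    (hu x hx).differentiableAt.differentiableWithinAt
  refine contDiffOn_infty.2 fun n => ?_
  induction n with
  | zero => exact contDiffOn_zero.2 hdiff.continuousOn
  | succ n ih =>
    rw [Nat.cast_succ]
    refine (contDiffOn_succ_iff_deriv_of_isOpen hs).2 ⟨hdiff, by simp, ?_⟩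
    exact ((contDiff_infty.1 hF n).comp_contDiffOn ih).congr fun x hx => (hu x hx).deriv

lemma aeval_nnreal_nonneg (P : ℝ≥0[X]) {y : ℝ} (hy : 0 ≤ y) : 0 ≤ Polynomial.aeval y P := by
  rw [Polynomial.aeval_eq_sum_range]
  exact Finset.sum_nonneg fun i _ => smul_nonneg (P.coeff i).2 (pow_nonneg hy i)

lemma neg_one_pow_mul_iteratedDeriv_aeval_nonneg {u : ℝ → ℝ} {Q : ℝ≥0[X]} {s : Set ℝ}
    (hs : IsOpen s) (hu₀ : ∀ x ∈ s, 0 ≤ u x)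
    (hu : ∀ x ∈ s, HasDerivAt u (-Polynomial.aeval (u x) Q) x) (P : ℝ≥0[X]) (n : ℕ)
    {x : ℝ} (hx : x ∈ s) :
    0 ≤ (-1 : ℝ) ^ n * iteratedDeriv n (fun y => Polynomial.aeval (u y) P) x := by
  induction n generalizing P with
  | zero => simpa using aeval_nnreal_nonneg P (hu₀ x hx)
  | succ n ih =>
    have hderiv : deriv (fun y => Polynomial.aeval (u y) P) =ᶠ[𝓝 x]
        fun y => -Polynomial.aeval (u y) (P.derivative * Q) := by
      filter_upwards [hs.mem_nhds hx] with y hy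
      have hcomp : HasDerivAt (fun z => Polynomial.aeval (u z) P)
          (Polynomial.aeval (u y) P.derivative * -Polynomial.aeval (u y) Q) y :=
        (P.hasDerivAt_aeval (u y)).comp y (hu y hy)
      rw [hcomp.deriv, map_mul, mul_neg]
    rw [iteratedDeriv_succ', hderiv.iteratedDeriv_eq, iteratedDeriv_fun_neg, pow_succ]
    simpa only [mul_neg, mul_one, neg_mul, neg_neg] using ih (P.derivative * Q)

lemma completelyMonotonic_aeval_of_hasDerivAt {u : ℝ → ℝ} {Q : ℝ≥0[X]}
    (hu₀ : ∀ x ∈ Ioi (0 : ℝ), 0 ≤ u x)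
    (hu : ∀ x ∈ Ioi (0 : ℝ), HasDerivAt u (-Polynomial.aeval (u x) Q) x) (P : ℝ≥0[X]) :
    CompletelyMonotonic fun x => Polynomial.aeval (u x) P := by
  have hsmooth : ContDiffOn ℝ ∞ u (Ioi 0) :=
    contDiffOn_infty_of_hasDerivAt_comp isOpen_Ioi (Q.contDiff_aeval ∞).neg hu
  exact ⟨fun x hx => (P.contDiff_aeval ∞).contDiffAt.comp x
      (hsmooth.contDiffAt (isOpen_Ioi.mem_nhds hx)),
    fun n _ hx => neg_one_pow_mul_iteratedDeriv_aeval_nonneg isOpen_Ioi hu₀ hu P n hx⟩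

lemma CompletelyMonotonic.congr {f g : ℝ → ℝ} (hf : CompletelyMonotonic f)
    (hfg : EqOn g f (Ioi 0)) : CompletelyMonotonic g := by
  have hnhds : ∀ x : ℝ, 0 < x → g =ᶠ[𝓝 x] f := fun x hx =>
    hfg.eventuallyEq_of_mem (Ioi_mem_nhds hx)
  refine ⟨fun x hx => (hf.1 x hx).congr_of_eventuallyEq (hnhds x hx), fun n x hx => ?_⟩
  rw [(hnhds x hx).iteratedDeriv_eq]
  exact hf.2 n x hx

lemma neg_deriv_one_div_div_one_div {𝕜 : Type*} [NontriviallyNormedField 𝕜] {g : 𝕜 → 𝕜} {x : 𝕜}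
    (hg : DifferentiableAt 𝕜 g x) :
    -deriv (fun y => 1 / g y) x / (1 / g x) = logDeriv g x := by
  have hinv : logDeriv (fun y => 1 / g y) x = -logDeriv g x := by
    simpa using logDeriv_fun_zpow hg (-1)
  rw [neg_div, ← logDeriv_apply (fun y => 1 / g y), hinv, neg_neg]

lemma logCompletelyMonotonic_one_div {g : ℝ → ℝ} (hpos : ∀ x, 0 < x → 0 < g x)
    (hsmooth : ∀ x, 0 < x → ContDiffAt ℝ ∞ g x) (hg : CompletelyMonotonic (logDeriv g)) :
    LogCompletelyMonotonic fun x => 1 / g x :=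
  ⟨fun x hx => one_div_pos.2 (hpos x hx),
    fun x hx => contDiffAt_const.div (hsmooth x hx) (hpos x hx).ne',
    hg.congr fun x hx =>
      neg_deriv_one_div_div_one_div ((hsmooth x hx).differentiableAt (by simp))⟩

lemma logDeriv_sinh (x : ℝ) : logDeriv Real.sinh x = Real.cosh x / Real.sinh x := by
  rw [logDeriv_apply, Real.deriv_sinh]

lemma hasDerivAt_cosh_div_sinh_sub_one {x : ℝ} (hx : x ≠ 0) :
    HasDerivAt (fun y => Real.cosh y / Real.sinh y - 1)
      (-((Real.cosh x / Real.sinh x - 1) ^ 2 + 2 * (Real.cosh x / Real.sinh x - 1))) x := by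
  have hsinh : Real.sinh x ≠ 0 := Real.sinh_ne_zero.2 hx
  have hquot := ((Real.hasDerivAt_cosh x).fun_div (Real.hasDerivAt_sinh x) hsinh).sub_const 1
  refine hquot.congr_deriv ?_
  field_simp
  ring

lemma completelyMonotonic_cosh_div_sinh :
    CompletelyMonotonic fun x => Real.cosh x / Real.sinh x := by
  have hnonneg : ∀ x ∈ Ioi (0 : ℝ), 0 ≤ Real.cosh x / Real.sinh x - 1 := fun x hx =>
    sub_nonneg.2 ((one_le_div (Real.sinh_pos_iff.2 hx)).2 (Real.sinh_lt_cosh x).le)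
  have hriccati : ∀ x ∈ Ioi (0 : ℝ), HasDerivAt (fun y => Real.cosh y / Real.sinh y - 1)
      (-Polynomial.aeval (Real.cosh x / Real.sinh x - 1)
        (Polynomial.X ^ 2 + Polynomial.C 2 * Polynomial.X : ℝ≥0[X])) x := fun x hx => by
    simpa [NNReal.smul_def] using hasDerivAt_cosh_div_sinh_sub_one (ne_of_gt hx)
  refine (completelyMonotonic_aeval_of_hasDerivAt hnonneg hriccati (1 + Polynomial.X)).congr
    fun x _ => ?_
  simp only [map_add, map_one, Polynomial.aeval_X, add_sub_cancel]

lemma cosh_eq_exp_mul_one_add (x : ℝ) :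
    Real.cosh x = Real.exp x * (1 + Real.exp (-2 * x)) / 2 := by
  rw [Real.cosh_eq, mul_add, mul_one, ← Real.exp_add]
  ring_nf

lemma sinh_eq_exp_mul_one_sub (x : ℝ) :
    Real.sinh x = Real.exp x * (1 - Real.exp (-2 * x)) / 2 := by
  rw [Real.sinh_eq, mul_sub, mul_one, ← Real.exp_add]
  ring_nf

lemma one_add_div_one_sub_eq_tsum {q : ℝ} (hq : |q| < 1) :
    (1 + q) / (1 - q) = 1 + 2 * ∑' k : ℕ, q ^ (k + 1) := by
  have hne : 1 - q ≠ 0 := (sub_pos.2 (lt_of_abs_lt hq)).ne'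
  simp_rw [pow_succ']
  rw [tsum_mul_left, tsum_geometric_of_abs_lt_one hq]
  field_simp
  ring

lemma cosh_div_sinh_eq_tsum {x : ℝ} (hx : 0 < x) :
    Real.cosh x / Real.sinh x = 1 + 2 * ∑' k : ℕ, Real.exp (-2 * ((k : ℝ) + 1) * x) := by
  have hq : |Real.exp (-2 * x)| < 1 := by
    rw [Real.abs_exp, Real.exp_lt_one_iff]
    linarith
  have hpow : ∀ k : ℕ, Real.exp (-2 * ((k : ℝ) + 1) * x) = Real.exp (-2 * x) ^ (k + 1) := by
    intro k
    rw [← Real.exp_nat_mul]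
    push_cast
    ring_nf
  calc Real.cosh x / Real.sinh x
      = (1 + Real.exp (-2 * x)) / (1 - Real.exp (-2 * x)) := by
        rw [cosh_eq_exp_mul_one_add, sinh_eq_exp_mul_one_sub, div_div_div_cancel_right₀ two_ne_zero,
          mul_div_mul_left _ _ (Real.exp_ne_zero x)]
    _ = 1 + 2 * ∑' k : ℕ, Real.exp (-2 * x) ^ (k + 1) :=
        one_add_div_one_sub_eq_tsum hq
    _ = 1 + 2 * ∑' k : ℕ, Real.exp (-2 * ((k : ℝ) + 1) * x) := by simp_rw [hpow]

lemma tendsto_rpow_mul_one_div_sinh_atTop (lam : ℝ) :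
    Tendsto (fun x => x ^ lam * (1 / Real.sinh x)) atTop (𝓝 0) := by
  have hexp : Tendsto (fun x : ℝ => Real.exp (-2 * x)) atTop (𝓝 0) :=
    Real.tendsto_exp_atBot.comp (tendsto_id.const_mul_atTop_of_neg (by norm_num))
  have hratio : Tendsto (fun x : ℝ => 2 / (1 - Real.exp (-2 * x))) atTop (𝓝 (2 / (1 - 0))) :=
    tendsto_const_nhds.div (tendsto_const_nhds.sub hexp) (by norm_num)
  have hprod := (tendsto_rpow_mul_exp_neg_mul_atTop_nhds_zero lam 1 one_pos).mul hratio
  rw [zero_mul] at hprod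
  refine hprod.congr fun x => ?_
  rw [sinh_eq_exp_mul_one_sub, neg_one_mul, Real.exp_neg, one_div_div, mul_assoc,
    div_mul_eq_div_div, div_eq_inv_mul 2 (Real.exp x), mul_div_assoc]

lemma rpow_mul_add_rpow_neg_le_of_le {lam x y t : ℝ} (hlam : 0 ≤ lam) (hx : 0 < x) (hxy : x ≤ y)
    (ht : 0 ≤ t) : x ^ lam * (x + t) ^ (-lam) ≤ y ^ lam * (y + t) ^ (-lam) := by
  have hy : 0 < y := hx.trans_le hxy
  rw [Real.rpow_neg (by positivity), Real.rpow_neg (by positivity), ← div_eq_mul_inv,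
    ← div_eq_mul_inv, ← Real.div_rpow hx.le (by positivity), ← Real.div_rpow hy.le (by positivity)]
  gcongr ?_ ^ lam
  rw [div_le_div_iff₀ (by positivity) (by positivity)]
  nlinarith

namespace IsGenStieltjes

variable {lam : ℝ} {f : ℝ → ℝ}

lemma nonneg (hf : IsGenStieltjes lam f) {x : ℝ} (hx : 0 < x) : 0 ≤ f x := by
  obtain ⟨μ, c, hc, hμ, hrep⟩ := hf
  have hsupp : ∀ᵐ t ∂μ, 0 ≤ t := by simpa [ae_iff, ← Iio_def] using hμ
  rw [(hrep x hx).2]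
  refine add_nonneg (integral_nonneg_of_ae ?_) hc
  filter_upwards [hsupp] with t ht using Real.rpow_nonneg (by positivity) _

lemma monotoneOn_rpow_mul (hf : IsGenStieltjes lam f) (hlam : 0 ≤ lam) :
    MonotoneOn (fun x => x ^ lam * f x) (Ioi 0) := by
  obtain ⟨μ, c, hc, hμ, hrep⟩ := hf
  have hsupp : ∀ᵐ t ∂μ, 0 ≤ t := by simpa [ae_iff, ← Iio_def] using hμ
  intro x (hx : 0 < x) y (hy : 0 < y) hxy
  obtain ⟨hx_int, hx_eq⟩ := hrep x hx
  obtain ⟨hy_int, hy_eq⟩ := hrep y hy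
  simp only [hx_eq, hy_eq, mul_add, ← integral_const_mul]
  gcongr ?_ + ?_ ^ lam * c
  refine integral_mono_ae (hx_int.const_mul _) (hy_int.const_mul _) ?_
  filter_upwards [hsupp] with t ht using rpow_mul_add_rpow_neg_le_of_le hlam hx hxy ht

lemma eqOn_zero_of_tendsto_rpow_mul (hf : IsGenStieltjes lam f) (hlam : 0 ≤ lam)
    (hlim : Tendsto (fun x => x ^ lam * f x) atTop (𝓝 0)) : EqOn f 0 (Ioi 0) := by
  intro x (hx : 0 < x)
  have hle : x ^ lam * f x ≤ 0 := by
    refine ge_of_tendsto hlim ?_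
    filter_upwards [eventually_ge_atTop x] with y hxy
    exact hf.monotoneOn_rpow_mul hlam hx (hx.trans_le hxy) hxy
  exact le_antisymm (nonpos_of_mul_nonpos_right hle (Real.rpow_pos_of_pos hx lam)) (hf.nonneg hx)

end IsGenStieltjes

lemma not_isGenStieltjes_one_div_sinh {lam : ℝ} (hlam : 0 ≤ lam) :
    ¬ IsGenStieltjes lam fun x => 1 / Real.sinh x := fun hf =>
  have hzero : 1 / Real.sinh 1 = 0 :=
    hf.eqOn_zero_of_tendsto_rpow_mul hlam (tendsto_rpow_mul_one_div_sinh_atTop lam)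
      (mem_Ioi.2 one_pos)
  (one_div_pos.2 (Real.sinh_pos_iff.2 one_pos)).ne' hzero

/-- Theorem: `1/sinh` is logarithmically completely monotonic, with
`-f'/f = coth x = 1 + 2 Σ_{k≥1} e^{-2kx}`, but it is not a generalized Stieltjes
function of any order `lam > 0`. -/
theorem stmt3 :
    LogCompletelyMonotonic (fun x => 1 / Real.sinh x) ∧
    (∀ x : ℝ, 0 < x →
      -deriv (fun y => 1 / Real.sinh y) x / (1 / Real.sinh x)
        = Real.cosh x / Real.sinh x ∧
      Real.cosh x / Real.sinh x
        = 1 + 2 * ∑' k : ℕ, Real.exp (-2 * ((k : ℝ) + 1) * x)) ∧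
    (∀ lam : ℝ, 0 < lam → ¬ IsGenStieltjes lam (fun x => 1 / Real.sinh x)) := by
  have hlogDeriv : CompletelyMonotonic (logDeriv Real.sinh) :=
    completelyMonotonic_cosh_div_sinh.congr fun x _ => logDeriv_sinh x
  refine ⟨logCompletelyMonotonic_one_div (fun _ => Real.sinh_pos_iff.2)
    (fun _ _ => Real.contDiff_sinh.contDiffAt) hlogDeriv,
    fun x hx => ⟨?_, cosh_div_sinh_eq_tsum hx⟩,
    fun _ hlam => not_isGenStieltjes_one_div_sinh hlam.le⟩
  rw [neg_deriv_one_div_div_one_div Real.differentiable_sinh.differentiableAt, logDeriv_sinh]
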